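/- arXiv:2107.02760 — 2 statements merged into one kernel-verified Lean document; each statement's English description precedes it below -/
import Mathlib

section
/- Let 𝔐 be a Γ-ring satisfying conditions (i)–(iv), let k ≥ 1 be an integer, and let f : 𝔐 × Γ × 𝔐 → 𝔐 be a map satisfying conditions (v)–(vii). Then u β f(x, γ, y) = f(u β x, γ, u β y) and f(x, γ, y) β u = f(x β u, γ, y β u) for all x, y, u ∈ 𝔐 and β, γ ∈ Γ. -/
/-!
Fix one of the two identities and let `d` be the difference of its two sides. Multiplying `d` by an
arbitrary `k`-fold product gives `0`: since `k ≥ 1`, one more factor between a `k`-fold product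
and its argument can be absorbed, and the result regrouped as a `k`-fold product (`exists_snoc_tri`, `exists_cons_tri`), so the `k`-fold
multiplicativity of `f` evaluates both sides to the same value. It remains to cancel a `k`-fold
product, one factor at a time (`eq_zero_of_snoc`, `eq_zero_of_cons`): on the right this is
hypothesis `hii`, and on the left it is the consequence of `hiii` that `m δ x = 0` for all `m`, `δ`
forces `x = 0`.
-/

/-- A `Γ`-ring in the sense of Barnes: abelian groups `M` and `Γ` with a triple product
`M → Γ → M → M` that is additive in each variable and associative. -/
structure GammaRing (M : Type*) (Γ : Type*) [AddCommGroup M] [AddCommGroup Γ] where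
  tri : M → Γ → M → M
  add_left : ∀ x y α z, tri (x + y) α z = tri x α z + tri y α z
  add_right : ∀ x α y z, tri x α (y + z) = tri x α y + tri x α z
  add_mid : ∀ x α β y, tri x (α + β) y = tri x α y + tri x β y
  assoc : ∀ x α y β z, tri (tri x α y) β z = tri x α (tri y β z)

namespace GammaRing

variable {M Γ : Type*} [AddCommGroup M] [AddCommGroup Γ]

/-- The product `x₀ γ₀ x₁ γ₁ ⋯ γ_{k-1} x_k` (right associated). -/
def prodF (G : GammaRing M Γ) : (k : ℕ) → (Fin (k + 1) → M) → (Fin k → Γ) → M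
  | 0, x, _ => x 0
  | k + 1, x, γ => G.tri (x 0) (γ 0) (G.prodF k (fun i => x i.succ) (fun i => γ i.succ))

end GammaRing

namespace GammaRing

variable {M Γ : Type*} [AddCommGroup M] [AddCommGroup Γ] (G : GammaRing M Γ)

lemma tri_zero (x : M) (α : Γ) : G.tri x α 0 = 0 := by
  have h := G.add_right x α 0 0
  simpa using h

lemma tri_sub (x : M) (α : Γ) (y z : M) :
    G.tri x α (y - z) = G.tri x α y - G.tri x α z := by
  have h := G.add_right x α (y - z) z
  rw [sub_add_cancel] at h
  exact eq_sub_of_add_eq h.symm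

lemma sub_tri (x y : M) (α : Γ) (z : M) :
    G.tri (x - y) α z = G.tri x α z - G.tri y α z := by
  have h := G.add_left (x - y) y α z
  rw [sub_add_cancel] at h
  exact eq_sub_of_add_eq h.symm

lemma prodF_snoc_succ (k : ℕ) (u : Fin (k + 1) → M) (δ : Fin (k + 1) → Γ) (x : M) :
    G.prodF (k + 1) (Fin.snoc u x) δ =
      G.tri (u 0) (δ 0) (G.prodF k (Fin.snoc (Fin.tail u) x) (Fin.tail δ)) := by
  have h : (Fin.snoc u x : Fin (k + 2) → M) =
      Fin.cons (u 0) (Fin.snoc (Fin.tail u) x : Fin (k + 1) → M) := by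
    rw [Fin.cons_snoc_eq_snoc_cons, Fin.cons_self_tail]
  rw [h]
  rfl

/-- The leftmost product can be carried out first, shortening the chain by one factor. -/
lemma prodF_cons_succ (k : ℕ) (u : Fin (k + 1) → M) (δ : Fin (k + 1) → Γ) (x : M) :
    G.prodF (k + 1) (Fin.cons x u) δ =
      G.prodF k (Fin.cons (G.tri x (δ 0) (u 0)) (Fin.tail u)) (Fin.tail δ) := by
  cases k with
  | zero => rfl
  | succ k => exact (G.assoc x (δ 0) (u 0) _ _).symm

lemma prodF_snoc_sub : ∀ (k : ℕ) (u : Fin k → M) (δ : Fin k → Γ) (x y : M),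
    G.prodF k (Fin.snoc u (x - y)) δ =
      G.prodF k (Fin.snoc u x) δ - G.prodF k (Fin.snoc u y) δ
  | 0, _, _, _, _ => by simp [prodF, Fin.snoc]
  | k + 1, u, δ, x, y => by
    simp only [prodF_snoc_succ, prodF_snoc_sub k, tri_sub]

lemma prodF_cons_sub : ∀ (k : ℕ) (u : Fin k → M) (δ : Fin k → Γ) (x y : M),
    G.prodF k (Fin.cons (x - y) u) δ =
      G.prodF k (Fin.cons x u) δ - G.prodF k (Fin.cons y u) δ
  | 0, _, _, _, _ => by simp [prodF]
  | k + 1, u, δ, x, y => by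
    simp only [prodF_cons_succ, prodF_cons_sub k, sub_tri]

/-- Left multiplication by `v β` and then by a nonempty chain is left multiplication by a single
chain of the same length. -/
lemma exists_snoc_tri (v : M) (β : Γ) : ∀ (k : ℕ) (u : Fin (k + 1) → M) (δ : Fin (k + 1) → Γ),
    ∃ (u' : Fin (k + 1) → M) (δ' : Fin (k + 1) → Γ), ∀ x : M,
      G.prodF (k + 1) (Fin.snoc u (G.tri v β x)) δ = G.prodF (k + 1) (Fin.snoc u' x) δ'
  | 0, u, δ => by
    refine ⟨fun _ => G.tri (u 0) (δ 0) v, fun _ => β, fun x => ?_⟩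
    rw [prodF_snoc_succ, prodF_snoc_succ]
    exact (G.assoc (u 0) (δ 0) v β x).symm
  | k + 1, u, δ => by
    obtain ⟨u', δ', h⟩ := exists_snoc_tri v β k (Fin.tail u) (Fin.tail δ)
    refine ⟨Fin.cons (u 0) u', Fin.cons (δ 0) δ', fun x => ?_⟩
    rw [G.prodF_snoc_succ (k + 1) u, h, G.prodF_snoc_succ (k + 1) (Fin.cons (u 0) u')]
    simp

/-- Right multiplication by `β v` and then by a nonempty chain is right multiplication by a single
chain of the same length. -/
lemma exists_cons_tri (v : M) (β : Γ) (k : ℕ) (u : Fin (k + 1) → M) (δ : Fin (k + 1) → Γ) :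
    ∃ (u' : Fin (k + 1) → M) (δ' : Fin (k + 1) → Γ), ∀ x : M,
      G.prodF (k + 1) (Fin.cons (G.tri x β v) u) δ = G.prodF (k + 1) (Fin.cons x u') δ' := by
  refine ⟨Fin.cons (G.tri v (δ 0) (u 0)) (Fin.tail u), Fin.cons β (Fin.tail δ), fun x => ?_⟩
  rw [prodF_cons_succ, prodF_cons_succ]
  simp [G.assoc]

lemma eq_zero_of_snoc (hl : ∀ x : M, (∀ (m : M) (δ : Γ), G.tri m δ x = 0) → x = 0) (d : M) :
    ∀ k : ℕ, (∀ (u : Fin k → M) (δ : Fin k → Γ), G.prodF k (Fin.snoc u d) δ = 0) → d = 0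
  | 0, h => by simpa [prodF, Fin.snoc] using h Fin.elim0 Fin.elim0
  | k + 1, h => by
    refine eq_zero_of_snoc hl d k fun u δ => hl _ fun m α => ?_
    have := h (Fin.cons m u) (Fin.cons α δ)
    rw [prodF_snoc_succ] at this
    simpa using this

lemma eq_zero_of_cons (hr : ∀ x : M, (∀ (γ : Γ) (m : M), G.tri x γ m = 0) → x = 0) :
    ∀ (k : ℕ) (d : M),
      (∀ (u : Fin k → M) (δ : Fin k → Γ), G.prodF k (Fin.cons d u) δ = 0) → d = 0
  | 0, d, h => by simpa [prodF] using h Fin.elim0 Fin.elim0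
  | k + 1, d, h => by
    refine hr _ fun α m => eq_zero_of_cons hr k _ fun u δ => ?_
    have := h (Fin.cons m u) (Fin.cons α δ)
    rw [prodF_cons_succ] at this
    simpa using this

end GammaRing

/-- Claim 1: `u β f(x,γ,y) = f(uβx, γ, uβy)` and `f(x,γ,y) β u = f(xβu, γ, yβu)`. -/
theorem gammaRing_f_claim1
    {M Γ Λ : Type*} [AddCommGroup M] [AddCommGroup Γ] [Nonempty Λ]
    (G : GammaRing M Γ)
    (e : Λ → M) (γs : Λ → Γ)
    (hidem : ∀ a, G.tri (e a) (γs a) (e a) = e a)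
    -- condition (i)
    (F : Λ → Γ → M → M) (F' : Λ → M → Γ → M)
    (hFadd : ∀ a γ x y, F a γ (x + y) = F a γ x + F a γ y)
    (hF'add : ∀ a x y γ, F' a (x + y) γ = F' a x γ + F' a y γ)
    (hFγ : ∀ a x, F a (γs a) x = x - G.tri (e a) (γs a) x)
    (hF'γ : ∀ a x, F' a x (γs a) = x - G.tri x (γs a) (e a))
    (hFmid : ∀ a x y β γ, G.tri (F' a x β) γ y = G.tri x β (F a γ y))
    -- condition (ii)
    (hii : ∀ x : M, (∀ (γ : Γ) (m : M), G.tri x γ m = 0) → x = 0)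
    -- condition (iii)
    (hiii : ∀ x : M, (∀ (a : Λ) (γ δ : Γ) (m : M), G.tri (G.tri (e a) γ m) δ x = 0) → x = 0)
    -- condition (iv)
    (hiv : ∀ (a : Λ) (x : M),
      (∀ (γ δ : Γ) (m : M),
        F' a (G.tri (G.tri (G.tri (e a) (γs a) x) (γs a) (e a)) γ m) δ = 0) →
      G.tri (G.tri (e a) (γs a) x) (γs a) (e a) = 0)
    (k : ℕ) (hk : 1 ≤ k)
    (f : M → Γ → M → M)
    -- condition (v)
    (hv : ∀ (x : M) (γ : Γ), f x γ 0 = 0 ∧ f 0 γ x = 0)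
    -- condition (vi): u₁γ₁u₂⋯γ_{k-1}u_kγ_k f(x,γ,y) = f(u₁γ₁⋯u_kγ_k x, γ, u₁γ₁⋯u_kγ_k y)
    (hvi : ∀ (u : Fin k → M) (δ : Fin k → Γ) (x : M) (γ : Γ) (y : M),
      G.prodF k (Fin.snoc u (f x γ y)) δ =
        f (G.prodF k (Fin.snoc u x) δ) γ (G.prodF k (Fin.snoc u y) δ))
    -- condition (vii): f(x,γ,y)γ₁u₁⋯γ_ku_k = f(xγ₁u₁⋯γ_ku_k, γ, yγ₁u₁⋯γ_ku_k)
    (hvii : ∀ (u : Fin k → M) (δ : Fin k → Γ) (x : M) (γ : Γ) (y : M),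
      G.prodF k (Fin.cons (f x γ y) u) δ =
        f (G.prodF k (Fin.cons x u) δ) γ (G.prodF k (Fin.cons y u) δ))
    :
    ∀ (x y u : M) (β γ : Γ),
      G.tri u β (f x γ y) = f (G.tri u β x) γ (G.tri u β y) ∧
      G.tri (f x γ y) β u = f (G.tri x β u) γ (G.tri y β u) := by
  obtain ⟨j, rfl⟩ : ∃ j, k = j + 1 := ⟨k - 1, by omega⟩
  intro x y u β γ
  constructor
  · refine sub_eq_zero.mp (G.eq_zero_of_snoc (fun z hz => hiii z fun a α δ m => ?_) _ (j + 1)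
      fun w δ => ?_)
    · rw [G.assoc, hz, G.tri_zero]
    · obtain ⟨w', δ', h⟩ := G.exists_snoc_tri u β j w δ
      rw [G.prodF_snoc_sub, h, hvi, hvi, h, h, sub_self]
  · refine sub_eq_zero.mp (G.eq_zero_of_cons hii (j + 1) _ fun w δ => ?_)
    obtain ⟨w', δ', h⟩ := G.exists_cons_tri u β j w δ
    rw [G.prodF_cons_sub, h, hvii, hvii, h, h, sub_self]
end

section
/- Let n > 1 be an integer, let 𝔐 be a Γ-ring satisfying conditions (i)–(iv), and let 𝔊 be a Δ-ring. Then any n-multiplicative isomorphism (φ, ψ) of 𝔐 onto 𝔊 is additive, i.e., φ(x + y) = φ(x) + φ(y) for all x, y ∈ 𝔐. -/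
namespace GammaRing

/-! ### Words of multiplications -/

section Words

variable {M Γ : Type*} [AddCommGroup M] [AddCommGroup Γ]

lemma tri_zero_left (G : GammaRing M Γ) (α : Γ) (y : M) : G.tri 0 α y = 0 := by
  have h := G.add_left 0 0 α y
  simpa using h

lemma tri_zero_right (G : GammaRing M Γ) (x : M) (α : Γ) : G.tri x α 0 = 0 := by
  have h := G.add_right x α 0 0
  simpa using h

lemma tri_sub_left (G : GammaRing M Γ) (x y : M) (α : Γ) (z : M) :
    G.tri (x - y) α z = G.tri x α z - G.tri y α z := by
  have h := G.add_left (x - y) y α z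
  rw [sub_add_cancel] at h
  rw [h, add_sub_cancel_right]

lemma tri_sub_right (G : GammaRing M Γ) (x : M) (α : Γ) (y z : M) :
    G.tri x α (y - z) = G.tri x α y - G.tri x α z := by
  have h := G.add_right x α (y - z) z
  rw [sub_add_cancel] at h
  rw [h, add_sub_cancel_right]

/-- Associativity lets the last factor of a product be split off instead of the first. -/
lemma prodF_succ_last (G : GammaRing M Γ) (k : ℕ) (v : Fin (k + 1 + 1) → M)
    (γ : Fin (k + 1) → Γ) :
    G.prodF (k + 1) v γ =
      G.tri (G.prodF k (fun i => v i.castSucc) (fun i => γ i.castSucc))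
        (γ (Fin.last k)) (v (Fin.last (k + 1))) := by
  induction k with
  | zero => rfl
  | succ k ih =>
    rw [prodF, ih, prodF, G.assoc]
    rfl

/-- The multiplication of a variable by `m` through `γ`: `inl (m, γ)` is `x ↦ m γ x` and
`inr (γ, m)` is `x ↦ x γ m`. -/
abbrev MulOp (M Γ : Type*) := (M × Γ) ⊕ (Γ × M)

/-- The action of a single multiplication. -/
def evalOp (G : GammaRing M Γ) : MulOp M Γ → M → M
  | .inl p, x => G.tri p.1 p.2 x
  | .inr p, x => G.tri x p.1 p.2

/-- The composite of a word of multiplications; the head of the list acts last. -/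
def evalOps (G : GammaRing M Γ) (w : List (MulOp M Γ)) (x : M) : M :=
  w.foldr G.evalOp x

lemma evalOps_cons (G : GammaRing M Γ) (p : MulOp M Γ) (w : List (MulOp M Γ)) (x : M) :
    G.evalOps (p :: w) x = G.evalOp p (G.evalOps w x) := rfl

lemma evalOps_append (G : GammaRing M Γ) (w w' : List (MulOp M Γ)) (x : M) :
    G.evalOps (w ++ w') x = G.evalOps w (G.evalOps w' x) := by
  simp [evalOps]

lemma evalOps_add (G : GammaRing M Γ) (w : List (MulOp M Γ)) (x y : M) :
    G.evalOps w (x + y) = G.evalOps w x + G.evalOps w y := by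
  induction w with
  | nil => rfl
  | cons p w ih =>
    rw [evalOps_cons, ih]
    cases p with
    | inl p => exact G.add_right _ _ _ _
    | inr p => exact G.add_left _ _ _ _

lemma evalOps_replicate_idem (G : GammaRing M Γ) (p : MulOp M Γ)
    (hp : ∀ x, G.evalOp p (G.evalOp p x) = G.evalOp p x) (j : ℕ) (x : M) :
    G.evalOps (List.replicate (j + 1) p) x = G.evalOp p x := by
  induction j with
  | zero => rfl
  | succ j ih => rw [List.replicate_succ, evalOps_cons, ih, hp]

variable {G' Δ : Type*} [AddCommGroup G'] [AddCommGroup Δ]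

/-- A word of `k` multiplications applied to `x` is a product with `k` factors from `Γ`,
and its image under `(φ, ψ)` is the corresponding product of the images. -/
lemma evalOps_eq_prodF (G : GammaRing M Γ) (H : GammaRing G' Δ) (φ : M → G') (ψ : Γ → Δ)
    (w : List (MulOp M Γ)) (x : M) :
    ∃ (v : Fin (w.length + 1) → M) (γ : Fin w.length → Γ),
      G.evalOps w x = G.prodF w.length v γ ∧
      H.evalOps (w.map (Sum.map (Prod.map φ ψ) (Prod.map ψ φ))) (φ x) =
        H.prodF w.length (fun i => φ (v i)) (fun i => ψ (γ i)) := by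
  induction w with
  | nil => exact ⟨fun _ => x, Fin.elim0, rfl, rfl⟩
  | cons p w ih =>
    obtain ⟨v, γ, h1, h2⟩ := ih
    cases p with
    | inl p =>
      refine ⟨Fin.cons p.1 v, Fin.cons p.2 γ, ?_, ?_⟩
      · rw [evalOps_cons, h1]
        rfl
      · rw [List.map_cons, evalOps_cons, h2]
        rfl
    | inr p =>
      refine ⟨Fin.snoc (α := fun _ => M) v p.2, Fin.snoc (α := fun _ => Γ) γ p.1, ?_, ?_⟩
      · rw [evalOps_cons, h1]
        simp only [List.length_cons]
        rw [prodF_succ_last]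
        simp [evalOp]
      · rw [List.map_cons, evalOps_cons, h2]
        simp only [List.length_cons]
        rw [prodF_succ_last]
        simp [evalOp]

/-- The addition of `G'` transported to `M` along the bijection `φ`. -/
def transportAdd (φ : M ≃ G') (x y : M) : M := φ.symm (φ x + φ y)

lemma evalOps_transport (G : GammaRing M Γ) (H : GammaRing G' Δ) (k : ℕ) (φ : M ≃ G') (ψ : Γ ≃ Δ)
    (hmul : ∀ (x : Fin (k + 1) → M) (γ : Fin k → Γ),
      φ (G.prodF k x γ) = H.prodF k (fun i => φ (x i)) (fun i => ψ (γ i)))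
    (w : List (MulOp M Γ)) (hw : w.length = k) (x y : M) :
    G.evalOps w (transportAdd φ x y) = transportAdd φ (G.evalOps w x) (G.evalOps w y) := by
  subst hw
  have key : ∀ z, φ (G.evalOps w z) =
      H.evalOps (w.map (Sum.map (Prod.map φ ψ) (Prod.map ψ φ))) (φ z) := by
    intro z
    obtain ⟨v, γ, h1, h2⟩ := evalOps_eq_prodF G H φ ψ w z
    rw [h1, h2, hmul]
  apply φ.injective
  simp only [transportAdd, key, Equiv.apply_symm_apply, evalOps_add]

lemma evalOps_transport_mul (G : GammaRing M Γ) (H : GammaRing G' Δ) (k : ℕ)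
    (φ : M ≃ G') (ψ : Γ ≃ Δ)
    (hmul : ∀ (x : Fin (k + 1) → M) (γ : Fin k → Γ),
      φ (G.prodF k x γ) = H.prodF k (fun i => φ (x i)) (fun i => ψ (γ i)))
    (t : ℕ) (w : List (MulOp M Γ)) (hw : w.length = t * k) (x y : M) :
    G.evalOps w (transportAdd φ x y) = transportAdd φ (G.evalOps w x) (G.evalOps w y) := by
  induction t generalizing w x y with
  | zero =>
    have : w = [] := by simpa using hw
    subst this
    rfl
  | succ t ih =>
    have hsplit := List.take_append_drop k w
    rw [Nat.succ_mul] at hw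
    rw [← hsplit]
    simp only [evalOps_append]
    rw [ih (w.drop k) (by rw [List.length_drop]; omega),
      evalOps_transport G H k φ ψ hmul (w.take k) (by rw [List.length_take]; omega)]

/-- The transported addition commutes with every word that starts with an idempotent
multiplication, because repeating that multiplication brings the length of the word to a
multiple of `k`. -/
lemma evalOps_transport_of_idem (G : GammaRing M Γ) (H : GammaRing G' Δ) (k : ℕ) (hk : 0 < k)
    (φ : M ≃ G') (ψ : Γ ≃ Δ)
    (hmul : ∀ (x : Fin (k + 1) → M) (γ : Fin k → Γ),
      φ (G.prodF k x γ) = H.prodF k (fun i => φ (x i)) (fun i => ψ (γ i)))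
    (p : MulOp M Γ) (hp : ∀ x, G.evalOp p (G.evalOp p x) = G.evalOp p x)
    (w : List (MulOp M Γ)) (x y : M) :
    G.evalOps (p :: w) (transportAdd φ x y) =
      transportAdd φ (G.evalOps (p :: w) x) (G.evalOps (p :: w) y) := by
  obtain ⟨j, hj⟩ : ∃ j, j + 1 + w.length = (w.length + 1) * k := by
    have : w.length + 1 ≤ (w.length + 1) * k := Nat.le_mul_of_pos_right _ hk
    exact ⟨(w.length + 1) * k - (w.length + 1), by omega⟩
  have hpad : ∀ z, G.evalOps (p :: w) z = G.evalOps (List.replicate (j + 1) p ++ w) z := by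
    intro z
    rw [evalOps_append, evalOps_replicate_idem G p hp, evalOps_cons]
  simp only [hpad]
  exact evalOps_transport_mul G H k φ ψ hmul (w.length + 1) _ (by simpa using hj) x y

end Words

/-! ### Martindale's argument for an operation compatible with multiplications -/

section Peirce

variable {M Γ : Type*} [AddCommGroup M] [AddCommGroup Γ]

/-- For one idempotent `e = e γ₀ e`: an operation `s` with neutral element `0` that commutes with
right multiplications on `e γ₀ M` is the addition there. Here `f` and `f'` play the roles of
`(1 - e) γ x` and `x γ (1 - e)`. -/
lemma add_of_distrib_corner (G : GammaRing M Γ) (e : M) (g : Γ) (hidem : G.tri e g e = e)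
    (f : Γ → M → M) (f' : M → Γ → M)
    (hf : ∀ x, f g x = x - G.tri e g x)
    (hf' : ∀ x, f' x g = x - G.tri x g e)
    (hmid : ∀ x y β γ, G.tri (f' x β) γ y = G.tri x β (f γ y))
    (hii : ∀ x : M, (∀ (γ : Γ) (m : M), G.tri x γ m = 0) → x = 0)
    (hiv : ∀ x : M,
      (∀ (γ δ : Γ) (m : M), f' (G.tri (G.tri (G.tri e g x) g e) γ m) δ = 0) →
      G.tri (G.tri e g x) g e = 0)
    (s : M → M → M) (s0l : ∀ x, s 0 x = x) (s0r : ∀ x, s x 0 = x)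
    (hE : ∀ x y, G.tri e g (s x y) = s (G.tri e g x) (G.tri e g y))
    (hR : ∀ x y γ m, G.tri (G.tri e g (s x y)) γ m =
      s (G.tri (G.tri e g x) γ m) (G.tri (G.tri e g y) γ m))
    (u v : M) (hu : G.tri e g u = u) (hv : G.tri e g v = v) :
    s u v = u + v := by
  have ext : ∀ x y : M, (∀ γ m, G.tri x γ m = G.tri y γ m) → x = y := by
    intro x y h
    refine sub_eq_zero.mp (hii _ fun γ m => ?_)
    rw [G.tri_sub_left, h, sub_self]
  -- The Peirce decomposition `z = z e + z (1 - e)`, seen through right multiplications.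
  have split : ∀ z γ m, G.tri z γ m = G.tri (G.tri z g e) γ m + G.tri z g (f γ m) := by
    intro z γ m
    rw [← hmid, hf', G.tri_sub_left]
    abel
  have hs : ∀ x y, G.tri e g x = x → G.tri e g y = y → G.tri e g (s x y) = s x y := by
    intro x y hx hy
    rw [hE, hx, hy]
  have hr : ∀ x y, G.tri e g x = x → G.tri e g y = y → ∀ γ m,
      G.tri (s x y) γ m = s (G.tri x γ m) (G.tri y γ m) := by
    intro x y hx hy γ m
    have h := hR x y γ m
    rwa [hs x y hx hy, hx, hy] at h
  have he2 : ∀ γ m, G.tri e g (f γ m) = 0 := by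
    intro γ m
    rw [← hmid, hf', hidem, sub_self, G.tri_zero_left]
  have s_e_12 : ∀ x, G.tri e g x = x → G.tri x g e = 0 → s e x = e + x := by
    intro x hx hxe
    apply ext
    intro γ m
    rw [split (s e x), hr e x hidem hx, hr e x hidem hx, hidem, hxe, s0r, he2, s0l,
      G.add_left, split x γ m, hxe, G.tri_zero_left, zero_add]
  have s_12 : ∀ x y, G.tri e g x = x → G.tri x g e = 0 → G.tri e g y = y → G.tri y g e = 0 →
      s x y = x + y := by
    intro x y hx hxe hy hye
    apply ext
    intro γ m
    -- With `a = f γ m`, the identity `(e + y) (x a + a) = x a + y a` reduces additivity on the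
    -- products to `s e y = e + y`.
    have key : s (G.tri x g (f γ m)) (G.tri y g (f γ m)) =
        G.tri x g (f γ m) + G.tri y g (f γ m) := by
      have h := hr e y hidem hy g (G.tri x g (f γ m) + f γ m)
      have h1 : G.tri e g (G.tri x g (f γ m) + f γ m) = G.tri x g (f γ m) := by
        rw [G.add_right, he2, ← G.assoc, hx, add_zero]
      have h2 : G.tri y g (G.tri x g (f γ m) + f γ m) = G.tri y g (f γ m) := by
        rw [G.add_right, ← G.assoc, ← hx, ← G.assoc, hye, G.tri_zero_left, G.tri_zero_left,
          zero_add]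
      rw [s_e_12 y hy hye, G.add_left, h1, h2] at h
      exact h.symm
    rw [split (s x y), hr x y hx hy, hr x y hx hy, hxe, hye, s0l, G.tri_zero_left, zero_add, key,
      G.add_left, split x γ m, split y γ m, hxe, hye, G.tri_zero_left, zero_add, zero_add]
  -- `q δ (1 - e)` lies in the Peirce component `12` as soon as `q = e q`.
  have left_f' : ∀ q δ, G.tri e g q = q → G.tri e g (f' q δ) = f' q δ := by
    intro q δ hq
    apply ext
    intro ρ m
    rw [G.assoc, hmid, ← G.assoc, hq]
  have right_f' : ∀ q δ, G.tri (f' q δ) g e = 0 := by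
    intro q δ
    rw [hmid, hf, hidem, sub_self, G.tri_zero_right]
  have s_f : ∀ x y δ ρ m, G.tri e g x = x → G.tri e g y = y →
      s (G.tri x δ (f ρ m)) (G.tri y δ (f ρ m)) = G.tri x δ (f ρ m) + G.tri y δ (f ρ m) := by
    intro x y δ ρ m hx hy
    rw [← hmid, ← hmid, ← hr _ _ (left_f' x δ hx) (left_f' y δ hy),
      s_12 _ _ (left_f' x δ hx) (right_f' x δ) (left_f' y δ hy) (right_f' y δ), G.add_left]
  have s_11 : ∀ x y, G.tri e g x = x → G.tri x g e = x → G.tri e g y = y → G.tri y g e = y →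
      s x y = x + y := by
    intro x y hx hxe hy hye
    have hp : G.tri (G.tri e g (s x y - (x + y))) g e = s x y - (x + y) := by
      rw [G.tri_sub_right, hs x y hx hy, G.add_right, hx, hy, G.tri_sub_left, hr x y hx hy,
        G.add_left, hxe, hye]
    have h := hiv (s x y - (x + y)) (by
      rw [hp]
      intro γ δ m
      apply hii
      intro ρ m'
      have hxm : G.tri e g (G.tri x γ m) = G.tri x γ m := by rw [← G.assoc, hx]
      have hym : G.tri e g (G.tri y γ m) = G.tri y γ m := by rw [← G.assoc, hy]
      rw [hmid, G.tri_sub_left, hr x y hx hy, G.add_left, G.tri_sub_left, hr _ _ hxm hym,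
        G.add_left, s_f _ _ δ ρ m' hxm hym, sub_self])
    rw [hp] at h
    exact sub_eq_zero.mp h
  apply ext
  intro γ m
  have corner : ∀ x, G.tri e g x = x →
      G.tri e g (G.tri x g e) = G.tri x g e ∧ G.tri (G.tri x g e) g e = G.tri x g e := by
    intro x hx
    exact ⟨by rw [← G.assoc, hx], by rw [G.assoc, hidem]⟩
  rw [split (s u v), hr u v hu hv, hr u v hu hv,
    s_11 _ _ (corner u hu).1 (corner u hu).2 (corner v hv).1 (corner v hv).2,
    s_f u v g γ m hu hv, G.add_left, G.add_left, split u γ m, split v γ m]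
  abel

end Peirce

end GammaRing

open GammaRing

/-- Any `n`-multiplicative isomorphism of a `Γ`-ring satisfying (i)-(iv) onto an arbitrary
`Δ`-ring is additive. -/
theorem gammaRing_nMulIso_additive
    {M Γ Λ : Type*} [AddCommGroup M] [AddCommGroup Γ] [Nonempty Λ]
    (G : GammaRing M Γ)
    (e : Λ → M) (γs : Λ → Γ)
    (hidem : ∀ a, G.tri (e a) (γs a) (e a) = e a)
    -- condition (i)
    (F : Λ → Γ → M → M) (F' : Λ → M → Γ → M)
    (hFadd : ∀ a γ x y, F a γ (x + y) = F a γ x + F a γ y)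
    (hF'add : ∀ a x y γ, F' a (x + y) γ = F' a x γ + F' a y γ)
    (hFγ : ∀ a x, F a (γs a) x = x - G.tri (e a) (γs a) x)
    (hF'γ : ∀ a x, F' a x (γs a) = x - G.tri x (γs a) (e a))
    (hFmid : ∀ a x y β γ, G.tri (F' a x β) γ y = G.tri x β (F a γ y))
    -- condition (ii)
    (hii : ∀ x : M, (∀ (γ : Γ) (m : M), G.tri x γ m = 0) → x = 0)
    -- condition (iii)
    (hiii : ∀ x : M, (∀ (a : Λ) (γ δ : Γ) (m : M), G.tri (G.tri (e a) γ m) δ x = 0) → x = 0)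
    -- condition (iv)
    (hiv : ∀ (a : Λ) (x : M),
      (∀ (γ δ : Γ) (m : M),
        F' a (G.tri (G.tri (G.tri (e a) (γs a) x) (γs a) (e a)) γ m) δ = 0) →
      G.tri (G.tri (e a) (γs a) x) (γs a) (e a) = 0)
    {G' Δ : Type*} [AddCommGroup G'] [AddCommGroup Δ]
    (H : GammaRing G' Δ)
    (n : ℕ) (hn : 1 < n)
    (φ : M ≃ G') (ψ : Γ ≃ Δ)
    (hmul : ∀ (x : Fin (n - 1 + 1) → M) (γ : Fin (n - 1) → Γ),
      φ (G.prodF (n - 1) x γ) = H.prodF (n - 1) (fun i => φ (x i)) (fun i => ψ (γ i))) :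
    ∀ x y : M, φ (x + y) = φ x + φ y := by
  have hk : 0 < n - 1 := by omega
  have hφ0 : φ 0 = 0 := by
    -- If `φ x₀ = 0`, apply `φ` to the product `x₀ 0 0 ⋯ 0 = 0`, whose image has first factor `0`.
    obtain ⟨k, hk'⟩ : ∃ k, n - 1 = k + 1 := ⟨n - 2, by omega⟩
    rw [hk'] at hmul
    have h := hmul (fun i => if i = 0 then φ.symm 0 else 0) (fun _ => 0)
    have h1 : ∀ (j : ℕ) (γ : Fin j → Γ), G.prodF j (fun _ => 0) γ = 0 := by
      intro j
      induction j with
      | zero => intro γ; rfl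
      | succ j ih => intro γ; rw [prodF, ih, G.tri_zero_right]
    simp only [prodF, Fin.succ_ne_zero, if_true, if_false, Equiv.apply_symm_apply, h1,
      G.tri_zero_right, H.tri_zero_left] at h
    exact h
  have s0l : ∀ x, transportAdd φ 0 x = x := by
    intro x
    simp [transportAdd, hφ0]
  have s0r : ∀ x, transportAdd φ x 0 = x := by
    intro x
    simp [transportAdd, hφ0]
  have hword : ∀ (a : Λ) (w : List (MulOp M Γ)) (x y : M), _ :=
    fun a w => evalOps_transport_of_idem G H (n - 1) hk φ ψ hmul (.inl (e a, γs a))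
      (fun x => by simp only [evalOp]; rw [← G.assoc, hidem]) w
  have hE : ∀ a x y, G.tri (e a) (γs a) (transportAdd φ x y) =
      transportAdd φ (G.tri (e a) (γs a) x) (G.tri (e a) (γs a) y) :=
    fun a x y => hword a [] x y
  have hR : ∀ a x y γ m, G.tri (G.tri (e a) (γs a) (transportAdd φ x y)) γ m =
      transportAdd φ (G.tri (G.tri (e a) (γs a) x) γ m) (G.tri (G.tri (e a) (γs a) y) γ m) := by
    intro a x y γ m
    simp only [G.assoc]
    exact hword a [.inr (γ, m)] x y
  have hL : ∀ a γ δ m x y, G.tri (G.tri (e a) γ m) δ (transportAdd φ x y) =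
      transportAdd φ (G.tri (G.tri (e a) γ m) δ x) (G.tri (G.tri (e a) γ m) δ y) := by
    intro a γ δ m x y
    have h : ∀ z, G.tri (G.tri (e a) γ m) δ z =
        G.tri (e a) (γs a) (G.tri (G.tri (e a) γ m) δ z) := by
      intro z
      rw [← G.assoc, ← G.assoc, hidem]
    rw [h, h x, h y]
    exact hword a [.inl (G.tri (e a) γ m, δ)] x y
  have hadd : ∀ x y, transportAdd φ x y = x + y := by
    intro x y
    refine sub_eq_zero.mp (hiii _ fun a γ δ m => ?_)
    have hmem : ∀ z, G.tri (e a) (γs a) (G.tri (G.tri (e a) γ m) δ z) =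
        G.tri (G.tri (e a) γ m) δ z := by
      intro z
      rw [← G.assoc, ← G.assoc, hidem]
    rw [G.tri_sub_right, hL, G.add_right, sub_eq_zero]
    exact add_of_distrib_corner G (e a) (γs a) (hidem a) (F a) (F' a) (hFγ a) (hF'γ a) (hFmid a)
      hii (hiv a) (transportAdd φ) s0l s0r (hE a) (hR a) _ _ (hmem x) (hmem y)
  intro x y
  rw [← hadd x y, transportAdd, Equiv.apply_symm_apply]
end
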